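/- arXiv:2508.07936 — 2 statements merged into one kernel-verified Lean document; each statement's English description precedes it below -/
import Mathlib

section
/- The left shift S on the sequence space ℝ^ℕ is ergodic with respect to μ; that is, the increment sequence of a mixed fractional Brownian motion sampled at step h is a stationary ergodic Gaussian sequence. -/
open MeasureTheory Filter Set

/-- Lag-`k` autocovariance of the unit-step increments of a fractional Brownian
motion with Hurst index `H`. -/
noncomputable def rhoH (H : ℝ) (k : ℤ) : ℝ :=
  (|(k : ℝ) + 1| ^ (2 * H) + |(k : ℝ) - 1| ^ (2 * H) - 2 * |(k : ℝ)| ^ (2 * H)) / 2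

/-- Autocovariance of the step-`h` increments of the mixed fractional Brownian
motion `σ B + γ B^H`. -/
noncomputable def mixedCov (σ γ h H : ℝ) (k : ℤ) : ℝ :=
  σ ^ 2 * h * (if k = 0 then 1 else 0) + γ ^ 2 * h ^ (2 * H) * rhoH H k

/-- Left shift on sequence space. -/
def shift : (ℕ → ℝ) → (ℕ → ℝ) := fun ω k => ω (k + 1)

open scoped Topology ComplexConjugate
lemma rpow_mvt (p a b : ℝ) (ha : 0 < a) (hab : a < b) :
    ∃ c ∈ Ioo a b, b ^ p - a ^ p = p * c ^ (p - 1) * (b - a) := by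
  obtain ⟨c, hc, h⟩ := exists_hasDerivAt_eq_slope (fun x : ℝ => x ^ p)
    (fun x => p * x ^ (p - 1)) hab
    (fun x hx => (Real.continuousAt_rpow_const x p
      (Or.inl (ne_of_gt (lt_of_lt_of_le ha hx.1)))).continuousWithinAt)
    (fun x hx => Real.hasDerivAt_rpow_const (Or.inl (ne_of_gt (lt_trans ha hx.1))))
  refine ⟨c, hc, ?_⟩
  have : b - a ≠ 0 := by linarith [sub_pos.2 hab]
  rw [h]; field_simp

lemma second_diff_tendsto (p : ℝ) (h1 : 1 < p) (h2 : p < 2) :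
    Tendsto (fun x : ℝ => (|x + 1| ^ p + |x - 1| ^ p - 2 * |x| ^ p) / 2) atTop (𝓝 0) := by
  have hb : Tendsto (fun x : ℝ => p * (p - 1) * (x - 1) ^ (-(2 - p))) atTop (𝓝 0) := by
    have := (tendsto_rpow_neg_atTop (y := 2 - p) (by linarith)).comp
      (tendsto_atTop_add_const_right atTop (-1 : ℝ) tendsto_id)
    simpa [sub_eq_add_neg] using this.const_mul (p * (p - 1))
  refine squeeze_zero' ?_ ?_ hb
  all_goals
    filter_upwards [eventually_gt_atTop 2] with x hx
    obtain ⟨c, hc, e1⟩ := rpow_mvt p x (x + 1) (by linarith) (by linarith)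
    obtain ⟨d, hd, e2⟩ := rpow_mvt p (x - 1) x (by linarith) (by linarith)
    obtain ⟨e, he, e3⟩ := rpow_mvt (p - 1) d c (by linarith [hd.1]) (by linarith [hd.2, hc.1])
    rw [abs_of_pos (by linarith), abs_of_pos (by linarith), abs_of_pos (by linarith)]
    have hcd : 0 ≤ c - d := by linarith [hd.2, hc.1]
    have hcd2 : c - d ≤ 2 := by linarith [hd.1, hc.2]
    have hepos : 0 ≤ e ^ (p - 1 - 1) := Real.rpow_nonneg (by linarith [he.1, hd.1]) _
    have key : ((x + 1) ^ p + (x - 1) ^ p - 2 * x ^ p) / 2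
      = p * (p - 1) * (e ^ (p - 1 - 1) * ((c - d) / 2)) := by
      linear_combination (e1 - e2) / 2 + p / 2 * e3
    rw [key]
    have hpp : 0 ≤ p * (p - 1) := by nlinarith
  · positivity
  · apply mul_le_mul_of_nonneg_left _ hpp
    have : e ^ (p - 1 - 1) ≤ (x - 1) ^ (-(2 - p)) := by
      rw [show p - 1 - 1 = -(2 - p) by ring]
      exact Real.rpow_le_rpow_of_nonpos (by linarith) (by linarith [he.1, hd.1]) (by linarith)
    nlinarith

lemma mixedCov_tendsto (σ γ h H : ℝ) (hH : H ∈ Set.Ioo (1/2 : ℝ) 1) :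
    Tendsto (mixedCov σ γ h H) atTop (𝓝 0) := by
  have h1 : Tendsto (rhoH H) atTop (𝓝 0) :=
    (second_diff_tendsto (2 * H) (by linarith [hH.1]) (by linarith [hH.2])).comp
      (tendsto_intCast_atTop_atTop (R := ℝ))
  have h2 : Tendsto (fun k : ℤ => γ ^ 2 * h ^ (2 * H) * rhoH H k) atTop (𝓝 0) := by
    simpa using h1.const_mul (γ ^ 2 * h ^ (2 * H))
  refine h2.congr' ?_
  filter_upwards [eventually_gt_atTop 0] with k hk
  simp [mixedCov, hk.ne']

lemma mixedCov_neg (σ γ h H : ℝ) (k : ℤ) : mixedCov σ γ h H (-k) = mixedCov σ γ h H k := by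
  simp only [mixedCov, rhoH, neg_eq_zero]
  push_cast
  rw [abs_neg, show -(k:ℝ) + 1 = -((k:ℝ) - 1) by ring, show -(k:ℝ) - 1 = -((k:ℝ) + 1) by ring,
    abs_neg, abs_neg]
  ring

lemma meas_coord (x : ℝ) (k : ℕ) : Measurable (fun ω : ℕ → ℝ => x * ω k) := by
  have : Measurable (fun ω : ℕ → ℝ => ω k) := measurable_pi_apply k
  exact this.const_mul x

lemma gauss_general {μ : Measure (ℕ → ℝ)} {c : ℤ → ℝ}
    (hgauss : ∀ (n : ℕ) (a : Fin n → ℝ),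
      Measure.map (fun ω : ℕ → ℝ => ∑ k : Fin n, a k * ω (k : ℕ)) μ =
        ProbabilityTheory.gaussianReal 0
          (Real.toNNReal (∑ i : Fin n, ∑ j : Fin n, a i * a j * c ((i : ℤ) - (j : ℤ)))))
    {ι : Type*} [Fintype ι] (p : ι → ℕ) (a : ι → ℝ) :
    Measure.map (fun ω : ℕ → ℝ => ∑ i, a i * ω (p i)) μ =
      ProbabilityTheory.gaussianReal 0
        (Real.toNNReal (∑ i, ∑ j, a i * a j * c ((p i : ℤ) - (p j : ℤ)))) := by
  classical
  obtain ⟨N, hN⟩ : ∃ N, ∀ i, p i < N :=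
    ⟨Finset.univ.sup p + 1, fun i => Nat.lt_succ_of_le (Finset.le_sup (Finset.mem_univ i))⟩
  let q : ι → Fin N := fun i => ⟨p i, hN i⟩
  have key : ∀ F : Fin N → ℝ,
      ∑ k : Fin N, (∑ i, if q i = k then a i else 0) * F k = ∑ i, a i * F (q i) := by
    intro F
    simp only [Finset.sum_mul]
    rw [Finset.sum_comm]
    simp
  have := hgauss N (fun k => ∑ i, if q i = k then a i else 0)
  have e1 : (fun ω : ℕ → ℝ => ∑ i, a i * ω (p i)) = fun ω =>
      ∑ k : Fin N, (∑ i, if q i = k then a i else 0) * ω (k : ℕ) := by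
    funext ω
    exact (key (fun k => ω k)).symm
  rw [e1, this]
  congr 2
  simp only [mul_assoc]
  simp only [← Finset.mul_sum]
  rw [key (fun k => ∑ j : Fin N, (∑ i, if q i = j then a i else 0) * c ((k:ℤ) - (j:ℤ)))]
  refine Finset.sum_congr rfl fun i _ => ?_
  rw [key (fun k => c (((q i : ℕ):ℤ) - ((k:ℕ):ℤ)))]

lemma char_general {μ : Measure (ℕ → ℝ)} {c : ℤ → ℝ}
    (hgauss : ∀ (n : ℕ) (a : Fin n → ℝ),
      Measure.map (fun ω : ℕ → ℝ => ∑ k : Fin n, a k * ω (k : ℕ)) μ =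
        ProbabilityTheory.gaussianReal 0
          (Real.toNNReal (∑ i : Fin n, ∑ j : Fin n, a i * a j * c ((i : ℤ) - (j : ℤ)))))
    {ι : Type*} [Fintype ι] (p : ι → ℕ) (a : ι → ℝ) :
    ∫ ω, Complex.exp ((∑ i, a i * ω (p i) : ℝ) * Complex.I) ∂μ =
      ((Real.exp (- (max (∑ i, ∑ j, a i * a j * c ((p i : ℤ) - (p j : ℤ))) 0) / 2) : ℝ) : ℂ) := by
  have h1 := gauss_general hgauss p a
  have h2 := ProbabilityTheory.charFun_gaussianReal (μ := 0)
    (v := (Real.toNNReal (∑ i, ∑ j, a i * a j * c ((p i : ℤ) - (p j : ℤ))))) 1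
  rw [← h1, charFun_apply_real, integral_map (Measurable.aemeasurable (Finset.measurable_fun_sum _ fun i _ => meas_coord (a i) (p i)))
    (by fun_prop)] at h2
  simp only [Complex.ofReal_one, one_mul] at h2
  rw [h2]
  simp [Real.toNNReal, neg_div]

lemma double_sum_le (G : ℕ → ℕ → ℝ) (r : ℕ → ℝ)
    (h1 : ∀ j k, j ≤ k → G j k ≤ r (k - j)) (h2 : ∀ j k, j ≤ k → G k j ≤ r (k - j))
    (hr : ∀ n, 0 ≤ r n) (N : ℕ) :
    ∑ j ∈ Finset.range N, ∑ k ∈ Finset.range N, G j k ≤ 2 * N * ∑ l ∈ Finset.range N, r l := by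
  induction N with
  | zero => simp
  | succ N ih =>
    have e : ∑ j ∈ Finset.range (N+1), ∑ k ∈ Finset.range (N+1), G j k
      = ∑ j ∈ Finset.range N, ∑ k ∈ Finset.range N, G j k
        + ∑ j ∈ Finset.range N, G j N + ∑ k ∈ Finset.range (N+1), G N k := by
      rw [Finset.sum_range_succ, ← Finset.sum_add_distrib]
      simp only [Finset.sum_range_succ]
    have a1 : ∑ k ∈ Finset.range (N+1), G N k ≤ ∑ l ∈ Finset.range (N+1), r l := by
      rw [← Finset.sum_range_reflect]
      refine Finset.sum_le_sum fun i hi => ?_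
      have hi := Finset.mem_range.1 hi
      have := h2 (N + 1 - 1 - i) N (by omega)
      rwa [show N - (N + 1 - 1 - i) = i by omega] at this
    have a2 : ∑ j ∈ Finset.range N, G j N ≤ ∑ l ∈ Finset.range (N+1), r l := by
      calc ∑ j ∈ Finset.range N, G j N ≤ ∑ j ∈ Finset.range N, r (N - j) :=
            Finset.sum_le_sum fun i hi => h1 i N (Finset.mem_range.1 hi).le
        _ ≤ ∑ j ∈ Finset.range (N+1), r (N - j) := by
            rw [Finset.sum_range_succ]; linarith [hr (N - N)]
        _ = _ := by
            have := Finset.sum_range_reflect r (N + 1)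
            simpa using this
    have a3 : ∑ l ∈ Finset.range N, r l ≤ ∑ l ∈ Finset.range (N+1), r l := by
      rw [Finset.sum_range_succ]; linarith [hr N]
    have a4 := mul_le_mul_of_nonneg_left a3 (by positivity : (0:ℝ) ≤ 2 * N)
    rw [e]; push_cast; linarith

lemma mean_ergodic_zero {Ω : Type*} [MeasurableSpace Ω] (μ : Measure Ω) [IsProbabilityMeasure μ]
    (f : ℕ → Ω → ℂ) (hf : ∀ n, Measurable (f n)) (B : ℝ) (hB : ∀ n ω, ‖f n ω‖ ≤ B)
    (A : Set Ω) (c : ℂ) (hc : ∀ n, ∫ ω in A, f n ω ∂μ = c)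
    (r : ℕ → ℝ) (hr : Tendsto r atTop (𝓝 0))
    (hrf : ∀ j k, j ≤ k → ‖∫ ω, f k ω * conj (f j ω) ∂μ‖ ≤ r (k - j)) : c = 0 := by
  have hr0 : ∀ n, 0 ≤ r n := fun n => (norm_nonneg _).trans (by simpa using hrf 0 n (Nat.zero_le _))
  have hint : ∀ n, Integrable (f n) μ := fun n =>
    Integrable.of_bound (hf n).aestronglyMeasurable B (ae_of_all _ (hB n))
  have hprod : ∀ j k, Integrable (fun ω => f k ω * conj (f j ω)) μ := fun j k => by
    refine Integrable.of_bound ((hf k).mul (Complex.continuous_conj.measurable.comp (hf j))).aestronglyMeasurable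
      (B * B) (ae_of_all _ fun ω => ?_)
    rw [norm_mul, RCLike.norm_conj]
    exact mul_le_mul (hB _ _) (hB _ _) (norm_nonneg _) ((norm_nonneg _).trans (hB 0 ω))
  have main : ∀ N : ℕ, (N * ‖c‖) ^ 2 ≤ 2 * N * ∑ l ∈ Finset.range N, r l := by
    intro N
    set F : Ω → ℂ := fun ω => ∑ n ∈ Finset.range N, f n ω with hF
    have hFm : Measurable F := Finset.measurable_sum _ fun n _ => hf n
    have hFi : Integrable F μ := integrable_finsetSum _ fun n _ => hint n
    have s1 : N * ‖c‖ ≤ ∫ ω, ‖F ω‖ ∂μ := by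
      have : ∫ ω in A, F ω ∂μ = N * c := by
        rw [integral_finsetSum _ fun n _ => (hint n).integrableOn]
        simp [hc]
      calc N * ‖c‖ = ‖∫ ω in A, F ω ∂μ‖ := by rw [this]; simp
        _ ≤ ∫ ω in A, ‖F ω‖ ∂μ := norm_integral_le_integral_norm _
        _ ≤ _ := setIntegral_le_integral hFi.norm (ae_of_all _ fun ω => norm_nonneg _)
    have e2 : ∀ ω, ((‖F ω‖ ^ 2 : ℝ) : ℂ) =
        ∑ j ∈ Finset.range N, ∑ k ∈ Finset.range N, f j ω * conj (f k ω) := by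
      intro ω
      rw [Complex.ofReal_pow, ← Complex.mul_conj', hF, map_sum, Finset.sum_mul_sum]
    have hsqi : Integrable (fun ω => ‖F ω‖ ^ 2) μ := by
      have : Integrable (fun ω => ((‖F ω‖ ^ 2 : ℝ) : ℂ)) μ := by
        simp only [e2]
        exact integrable_finsetSum _ fun j _ => integrable_finsetSum _ fun k _ => hprod k j
      exact this.re
    have s2 : (∫ ω, ‖F ω‖ ∂μ) ^ 2 ≤ ∫ ω, ‖F ω‖ ^ 2 ∂μ := by
      set m := ∫ ω, ‖F ω‖ ∂μ with hm
      have h0 : 0 ≤ ∫ ω, (‖F ω‖ - m) ^ 2 ∂μ := integral_nonneg fun ω => sq_nonneg _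
      have : ∫ ω, (‖F ω‖ - m) ^ 2 ∂μ = ∫ ω, ‖F ω‖ ^ 2 ∂μ - 2 * m * m + m ^ 2 := by
        have e : ∀ ω, (‖F ω‖ - m) ^ 2 = ‖F ω‖ ^ 2 - 2 * m * ‖F ω‖ + m ^ 2 := fun ω => by ring
        simp only [e]
        have i1 : Integrable (fun ω => 2 * m * ‖F ω‖) μ := hFi.norm.const_mul _
        have i2 : Integrable (fun ω => ‖F ω‖ ^ 2 - 2 * m * ‖F ω‖) μ := hsqi.sub i1
        rw [integral_add i2 (integrable_const _), integral_sub hsqi i1, integral_const_mul]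
        simp [hm]
      nlinarith
    have s3 : ∫ ω, ‖F ω‖ ^ 2 ∂μ ≤
        ∑ j ∈ Finset.range N, ∑ k ∈ Finset.range N, ‖∫ ω, f j ω * conj (f k ω) ∂μ‖ := by
      have : ((∫ ω, ‖F ω‖ ^ 2 ∂μ : ℝ) : ℂ) =
          ∑ j ∈ Finset.range N, ∑ k ∈ Finset.range N, ∫ ω, f j ω * conj (f k ω) ∂μ := by
        rw [← integral_complex_ofReal]
        simp only [e2]
        rw [integral_finsetSum _ fun j _ => integrable_finsetSum _ fun k _ => hprod k j]
        exact Finset.sum_congr rfl fun j _ => integral_finsetSum _ fun k _ => hprod k j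
      calc ∫ ω, ‖F ω‖ ^ 2 ∂μ ≤ ‖((∫ ω, ‖F ω‖ ^ 2 ∂μ : ℝ) : ℂ)‖ := by
            rw [Complex.norm_real]; exact le_abs_self _
        _ ≤ _ := by
            rw [this]
            exact (norm_sum_le _ _).trans (Finset.sum_le_sum fun j _ => norm_sum_le _ _)
    have s4 := double_sum_le (fun j k => ‖∫ ω, f j ω * conj (f k ω) ∂μ‖) r
      (fun j k hjk => by
        have : ∫ ω, f j ω * conj (f k ω) ∂μ = conj (∫ ω, f k ω * conj (f j ω) ∂μ) := by
          rw [← integral_conj]; simp [mul_comm]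
        rw [this, RCLike.norm_conj]; exact hrf j k hjk)
      (fun j k hjk => hrf j k hjk) hr0 N
    have : (N * ‖c‖) ^ 2 ≤ (∫ ω, ‖F ω‖ ∂μ) ^ 2 := pow_le_pow_left₀ (by positivity) s1 2
    linarith
  have lim : Tendsto (fun N : ℕ => 2 * ((N : ℝ)⁻¹ * ∑ l ∈ Finset.range N, r l)) atTop (𝓝 0) := by
    simpa using hr.cesaro.const_mul 2
  have : ‖c‖ ^ 2 ≤ 0 := by
    refine ge_of_tendsto lim ?_
    filter_upwards [eventually_gt_atTop 0] with N hN
    have hN : (0:ℝ) < N := by exact_mod_cast hN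
    have := main N
    rw [← mul_le_mul_iff_right₀ (show (0:ℝ) < N ^ 2 by positivity)]
    calc (N:ℝ) ^ 2 * ‖c‖ ^ 2 = (N * ‖c‖) ^ 2 := by ring
      _ ≤ _ := this
      _ = _ := by field_simp
  have : ‖c‖ = 0 := by nlinarith [norm_nonneg c]
  exact norm_eq_zero.1 this

lemma shift_iterate_apply (n : ℕ) (ω : ℕ → ℝ) (k : ℕ) : (shift^[n] ω) k = ω (k + n) := by
  induction n generalizing ω k with
  | zero => simp
  | succ n ih =>
    rw [Function.iterate_succ_apply, ih]
    simp [shift, add_assoc]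

lemma set_char {μ : Measure (ℕ → ℝ)} [IsProbabilityMeasure μ] {c : ℤ → ℝ}
    (hc1 : Tendsto c atTop (𝓝 0)) (hc2 : ∀ k, c (-k) = c k)
    (hinv : MeasurePreserving shift μ μ)
    (hgauss : ∀ (n : ℕ) (a : Fin n → ℝ),
      Measure.map (fun ω : ℕ → ℝ => ∑ k : Fin n, a k * ω (k : ℕ)) μ =
        ProbabilityTheory.gaussianReal 0
          (Real.toNNReal (∑ i : Fin n, ∑ j : Fin n, a i * a j * c ((i : ℤ) - (j : ℤ)))))
    {A : Set (ℕ → ℝ)} (hA : MeasurableSet A) (hSA : shift ⁻¹' A = A)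
    {ι : Type*} [Fintype ι] (p : ι → ℕ) (a : ι → ℝ) :
    ∫ ω in A, Complex.exp ((∑ i, a i * ω (p i) : ℝ) * Complex.I) ∂μ =
      (μ.real A : ℂ) * ∫ ω, Complex.exp ((∑ i, a i * ω (p i) : ℝ) * Complex.I) ∂μ := by
  set v : ℝ := ∑ i, ∑ j, a i * a j * c ((p i : ℤ) - (p j : ℤ)) with hv
  set m : ℝ := Real.exp (-(max v 0) / 2) with hm
  let X : ℕ → (ℕ → ℝ) → ℝ := fun n ω => ∑ i, a i * ω (p i + n)
  have hX : ∀ n, Measurable (X n) := fun n =>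
    Finset.measurable_fun_sum _ fun i _ => meas_coord (a i) (p i + n)
  let e : ℕ → (ℕ → ℝ) → ℂ := fun n ω => Complex.exp ((X n ω : ℝ) * Complex.I)
  have he : ∀ n, Measurable (e n) := fun n => by
    have := hX n
    fun_prop
  have hen : ∀ n ω, ‖e n ω‖ = 1 := fun n ω => Complex.norm_exp_ofReal_mul_I _
  have hei : ∀ n, Integrable (e n) μ := fun n =>
    Integrable.of_bound (he n).aestronglyMeasurable 1 (ae_of_all _ fun ω => (hen n ω).le)
  have hem : ∀ n, ∫ ω, e n ω ∂μ = m := by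
    intro n
    have := char_general hgauss (fun i => p i + n) a
    simp only [Nat.cast_add, add_sub_add_right_eq_sub] at this
    exact this
  let V : ℕ → ℝ := fun d => v + v - ∑ i, ∑ j, a i * a j * c ((p i : ℤ) - (p j : ℤ) + d)
    - ∑ i, ∑ j, a i * a j * c ((p i : ℤ) - (p j : ℤ) - d)
  have hee : ∀ j k, j ≤ k → ∫ ω, e k ω * conj (e j ω) ∂μ
      = (Real.exp (-(max (V (k - j)) 0) / 2) : ℝ) := by
    intro j k hjk
    have := char_general hgauss (Sum.elim (fun i => p i + k) (fun i => p i + j))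
      (Sum.elim a (fun i => - a i))
    simp only [Fintype.sum_sum_type, Sum.elim_inl, Sum.elim_inr, Finset.sum_add_distrib] at this
    convert this using 2
    · funext ω
      simp only [e]
      rw [← Complex.exp_conj, ← Complex.exp_add]
      congr 1
      simp only [X, map_mul, Complex.conj_I, Complex.conj_ofReal, neg_mul, Finset.sum_neg_distrib]
      push_cast
      ring
    · congr 4
      simp only [V, hv]
      push_cast [Nat.cast_sub hjk]
      simp only [neg_mul, mul_neg, neg_neg, Finset.sum_neg_distrib]
      have r1 : ∀ i i' : ι, (p i : ℤ) + k - (p i' + j) = p i - p i' + (k - j) := fun _ _ => by ring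
      have r2 : ∀ i i' : ι, (p i : ℤ) + j - (p i' + k) = p i - p i' - (k - j) := fun _ _ => by ring
      simp only [r1, r2, add_sub_add_right_eq_sub]
      ring
  have hcm : Tendsto c atBot (𝓝 0) := by
    have := hc1.comp tendsto_neg_atBot_atTop
    refine this.congr fun k => ?_
    simp [hc2]
  have hV : Tendsto V atTop (𝓝 (v + v)) := by
    have t1 : Tendsto (fun d : ℕ => ∑ i, ∑ j, a i * a j * c ((p i : ℤ) - (p j : ℤ) + d))
        atTop (𝓝 (∑ i : ι, ∑ j : ι, a i * a j * 0)) := by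
      refine tendsto_finset_sum _ fun i _ => tendsto_finset_sum _ fun j _ => ?_
      exact (hc1.comp (tendsto_atTop_add_const_left _ _ tendsto_natCast_atTop_atTop)).const_mul _
    have t2 : Tendsto (fun d : ℕ => ∑ i, ∑ j, a i * a j * c ((p i : ℤ) - (p j : ℤ) - d))
        atTop (𝓝 (∑ i : ι, ∑ j : ι, a i * a j * 0)) := by
      refine tendsto_finset_sum _ fun i _ => tendsto_finset_sum _ fun j _ => ?_
      have : Tendsto (fun d : ℕ => (p i : ℤ) - (p j : ℤ) - (d : ℤ)) atTop atBot := by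
        simp only [sub_eq_add_neg _ (_ : ℤ)]
        exact tendsto_atBot_add_const_left _ _
          (tendsto_neg_atTop_atBot.comp tendsto_natCast_atTop_atTop)
      exact (hcm.comp this).const_mul _
    have := (t1.const_sub (v + v)).sub t2
    simpa using this
  let r : ℕ → ℝ := fun d => |Real.exp (-(max (V d) 0) / 2) - m ^ 2|
  have hr : Tendsto r atTop (𝓝 0) := by
    have t : Tendsto (fun d => Real.exp (-(max (V d) 0) / 2)) atTop (𝓝 (m ^ 2)) := by
      have : m ^ 2 = Real.exp (-(max (v + v) 0) / 2) := by
        rw [hm, ← Real.exp_nat_mul]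
        congr 1
        rcases le_total v 0 with h | h
        · rw [max_eq_right h, max_eq_right (by linarith)]; simp
        · rw [max_eq_left h, max_eq_left (by linarith)]; push_cast; ring
      rw [this]
      exact (Real.continuous_exp.tendsto _).comp (((hV.max tendsto_const_nhds).neg).div_const 2)
    have := (t.sub_const (m ^ 2)).abs
    simpa using this
  have hres : ∀ n, ∫ ω in A, (e n ω - m) ∂μ = ∫ ω in A, (e 0 ω - m) ∂μ := by
    intro n
    have hS := hinv.iterate n
    have hSn : shift^[n] ⁻¹' A = A := Function.IsFixedPt.preimage_iterate hSA n
    have h1 := setIntegral_map (μ := μ) (g := shift^[n]) (f := fun ω => e 0 ω - m) hA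
      ((he 0).sub_const _).aestronglyMeasurable hS.measurable.aemeasurable
    rw [hS.map_eq, hSn] at h1
    rw [h1]
    simp only [e, X, shift_iterate_apply, add_zero]
  have fin := mean_ergodic_zero μ (fun n ω => e n ω - m) (fun n => (he n).sub_const _)
    (1 + ‖(m : ℂ)‖) (fun n ω => (norm_sub_le _ _).trans (by rw [hen])) A _ hres r hr (by
      intro j k hjk
      have ic : Integrable (fun ω => conj (e j ω)) μ :=
        Integrable.of_bound (Complex.continuous_conj.measurable.comp (he j)).aestronglyMeasurable 1
          (ae_of_all _ fun ω => by rw [RCLike.norm_conj, hen])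
      have ip : Integrable (fun ω => e k ω * conj (e j ω)) μ :=
        Integrable.of_bound ((he k).mul
          (Complex.continuous_conj.measurable.comp (he j))).aestronglyMeasurable 1
          (ae_of_all _ fun ω => by rw [norm_mul, RCLike.norm_conj, hen, hen, one_mul])
      have i1 : Integrable (fun ω => (m : ℂ) * e k ω) μ := (hei k).const_mul _
      have i2 : Integrable (fun ω => (m : ℂ) * conj (e j ω)) μ := ic.const_mul _
      have i3 : Integrable (fun ω => e k ω * conj (e j ω) - m * e k ω) μ := ip.sub i1
      have i4 : Integrable (fun ω => e k ω * conj (e j ω) - m * e k ω - m * conj (e j ω)) μ :=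
        i3.sub i2
      have ex : ∀ ω, (e k ω - m) * conj (e j ω - m)
          = e k ω * conj (e j ω) - m * e k ω - m * conj (e j ω) + (m : ℂ) ^ 2 := fun ω => by
        rw [map_sub, Complex.conj_ofReal]; ring
      have : ∫ ω, (e k ω - m) * conj (e j ω - m) ∂μ
          = ((Real.exp (-(max (V (k - j)) 0) / 2) - m ^ 2 : ℝ) : ℂ) := by
        simp only [ex]
        rw [integral_add i4 (integrable_const _), integral_sub i3 i2, integral_sub ip i1,
          integral_const_mul, integral_const_mul, integral_conj, hem, hem, hee j k hjk]
        simp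
        ring
      rw [this, Complex.norm_real]
      exact le_rfl)
  rw [integral_sub (hei 0).integrableOn (integrable_const _)] at fin
  have h0 := hem 0
  simp only [e, X, add_zero] at fin h0
  rw [h0]
  rw [sub_eq_zero] at fin
  rw [fin]
  simp [Measure.real]

lemma ext_of_char {μ ν : Measure (ℕ → ℝ)} [IsFiniteMeasure μ] [IsFiniteMeasure ν]
    (h : ∀ (I : Finset ℕ) (a : I → ℝ),
      ∫ ω, Complex.exp ((∑ i, a i * ω (i : ℕ) : ℝ) * Complex.I) ∂μ =
      ∫ ω, Complex.exp ((∑ i, a i * ω (i : ℕ) : ℝ) * Complex.I) ∂ν) : μ = ν := by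
  classical
  have key : ∀ I : Finset ℕ, μ.map I.restrict = ν.map I.restrict := by
    intro I
    apply Measure.ext_of_charFunDual
    funext L
    have hm : Measurable (I.restrict : (ℕ → ℝ) → (I → ℝ)) := Finset.measurable_restrict I
    rw [charFunDual_apply, charFunDual_apply, integral_map hm.aemeasurable (by fun_prop),
      integral_map hm.aemeasurable (by fun_prop)]
    have e : ∀ ω : ℕ → ℝ, L (I.restrict ω) = ∑ i : I, L (Pi.single i 1) * ω (i : ℕ) := by
      intro ω
      have : I.restrict ω = ∑ i : I, ω (i : ℕ) • (Pi.single i 1 : I → ℝ) := by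
        have := pi_eq_sum_univ' (I.restrict ω)
        rw [this]
        refine Finset.sum_congr rfl fun i _ => rfl
      rw [this, map_sum]
      simp [mul_comm]
    simp only [e]
    exact h I _
  exact IsProjectiveLimit.unique (P := fun I => ν.map I.restrict) key (fun I => rfl)


/-- The left shift `S` on `ℝ^ℕ` is ergodic with respect to `μ`: the increment
sequence of a mixed fractional Brownian motion sampled at step `h` is a
stationary ergodic Gaussian sequence. -/
theorem shift_ergodic_of_mixedFBM_increments
    (σ γ h H : ℝ) (hσ : 0 < σ) (hγ : 0 < γ) (hh : 0 < h)
    (hH : H ∈ Set.Ioo (1/2 : ℝ) 1)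
    (μ : Measure (ℕ → ℝ)) [IsProbabilityMeasure μ]
    (hinv : MeasurePreserving shift μ μ)
    (hgauss : ∀ (n : ℕ) (a : Fin n → ℝ),
      Measure.map (fun ω : ℕ → ℝ => ∑ k : Fin n, a k * ω (k : ℕ)) μ =
        ProbabilityTheory.gaussianReal 0
          (Real.toNNReal (∑ i : Fin n, ∑ j : Fin n,
            a i * a j * mixedCov σ γ h H ((i : ℤ) - (j : ℤ))))) :
    Ergodic shift μ := by
  refine { hinv with aeconst_set := fun A hA hSA => ?_ }
  have heq : μ.restrict A = μ A • μ := by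
    have : IsFiniteMeasure (μ A • μ) := Measure.smul_finite μ (measure_ne_top μ A)
    refine ext_of_char fun I a => ?_
    rw [integral_smul_measure, set_char (mixedCov_tendsto σ γ h H hH) (mixedCov_neg σ γ h H)
      hinv hgauss hA hSA]
    simp [Measure.real]
  have h1 : μ A = μ A * μ A := by
    have := congrArg (fun ν : Measure (ℕ → ℝ) => ν A) heq
    simpa using this
  rw [eventuallyConst_set']
  have hA1 : μ A ≠ ⊤ := measure_ne_top μ A
  by_cases h0 : μ A = 0
  · left; exact ae_eq_empty.2 h0
  · right
    have : μ A = 1 := by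
      have h2 : μ A * 1 = μ A * μ A := by rw [mul_one]; exact h1
      exact ((ENNReal.mul_right_inj h0 hA1).1 h2).symm
    rw [ae_eq_univ]
    exact (prob_compl_eq_zero_iff hA).2 this
end

section
/- There exists a constant C > 0 (depending only on F) such that for all integers m ≥ 1, sup_{x∈[−1,1]} |Σ_{j,l=1}^m (min(F(x_j), F(x_l)) − F(x_j)F(x_l)) 𝓛_j(x) 𝓛_l(x) − F(x)(1 − F(x))| ≤ C m^{−1/2}. -/
open Filter Set Finset Real

noncomputable def chebNode (m j : ℕ) : ℝ :=
  Real.cos ((2 * (j : ℝ) - 1) * Real.pi / (2 * (m : ℝ)))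

noncomputable def chebT (m : ℕ) (x : ℝ) : ℝ := Real.cos ((m : ℝ) * Real.arccos x)

noncomputable def lagBasis (m j : ℕ) (x : ℝ) : ℝ :=
  ∏ i ∈ (Finset.Icc 1 m).erase j, (x - chebNode m i) / (chebNode m j - chebNode m i)

lemma hp_double (f L : ℕ → ℝ) (n : ℕ) :
    ∑ i ∈ Finset.range (n+1), ∑ j ∈ Finset.range (n+1), f (max i j) * L i * L j
      = f n * (∑ i ∈ Finset.range (n+1), L i)^2
        + ∑ i ∈ Finset.range n, (∑ j ∈ Finset.range (i+1), L j)^2 * (f i - f (i+1)) := by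
  induction n with
  | zero => simp; ring
  | succ n ih =>
    have e1 : ∑ i ∈ Finset.range (n+1), f (max i (n+1)) * L i * L (n+1)
        = f (n+1) * L (n+1) * ∑ i ∈ Finset.range (n+1), L i := by
      rw [Finset.mul_sum]
      refine Finset.sum_congr rfl fun i hi => ?_
      rw [max_eq_right (by have := Finset.mem_range.1 hi; omega)]; ring
    have e2 : ∑ i ∈ Finset.range (n+1), f (max (n+1) i) * L (n+1) * L i
        = f (n+1) * L (n+1) * ∑ i ∈ Finset.range (n+1), L i := by
      rw [Finset.mul_sum]
      refine Finset.sum_congr rfl fun i hi => ?_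
      rw [max_eq_left (by have := Finset.mem_range.1 hi; omega)]
    rw [Finset.sum_range_succ]
    have e3 : ∀ i, ∑ j ∈ Finset.range (n+1+1), f (max i j) * L i * L j
        = ∑ j ∈ Finset.range (n+1), f (max i j) * L i * L j + f (max i (n+1)) * L i * L (n+1) :=
      fun i => Finset.sum_range_succ _ _
    simp only [e3]
    rw [Finset.sum_add_distrib, ih, e1, e2, Finset.sum_range_succ (n := n+1) (f := L),
      Finset.sum_range_succ (n := n) (f := fun i => (∑ j ∈ Finset.range (i+1), L j)^2 * (f i - f (i+1)))]
    simp only [max_self]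
    ring

lemma hp_single (f L : ℕ → ℝ) (n : ℕ) :
    ∑ i ∈ Finset.range (n+1), f i * L i
      = f n * (∑ i ∈ Finset.range (n+1), L i)
        + ∑ i ∈ Finset.range n, (∑ j ∈ Finset.range (i+1), L j) * (f i - f (i+1)) := by
  induction n with
  | zero => simp
  | succ n ih =>
    rw [Finset.sum_range_succ, ih, Finset.sum_range_succ (n := n+1) (f := L),
      Finset.sum_range_succ (n := n) (f := fun i => (∑ j ∈ Finset.range (i+1), L j) * (f i - f (i+1)))]
    ring

lemma hp_alt_inc (a : ℕ → ℝ) (K : ℕ) (h0 : ∀ i < K, 0 ≤ a i)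
    (hm : ∀ i, i + 1 < K → a i ≤ a (i+1)) (j : ℕ) (hj : j < K) :
    0 ≤ (-1)^j * ∑ i ∈ Finset.range (j+1), (-1)^i * a i ∧
      (-1)^j * ∑ i ∈ Finset.range (j+1), (-1)^i * a i ≤ a j := by
  induction j with
  | zero => simp [h0 0 hj]
  | succ j ih =>
    have ih := ih (by omega)
    rw [Finset.sum_range_succ, mul_add, ← mul_assoc ((-1)^(j+1)) ((-1)^(j+1)), ← pow_add,
      Even.neg_one_pow (n := j+1+(j+1)) ⟨j+1, rfl⟩, pow_succ]
    have := hm j hj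
    constructor <;> linarith

lemma hp_alt_dec (a : ℕ → ℝ) (p j : ℕ) (h0 : ∀ i, j ≤ i → i ≤ j + p → 0 ≤ a i)
    (hm : ∀ i, j ≤ i → i + 1 ≤ j + p → a (i+1) ≤ a i) :
    0 ≤ ∑ i ∈ Finset.range (p+1), (-1)^i * a (j+i) ∧
      ∑ i ∈ Finset.range (p+1), (-1)^i * a (j+i) ≤ a j := by
  induction p generalizing j with
  | zero => simp [h0 j le_rfl (by omega)]
  | succ p ih =>
    have ih := ih (j+1) (fun i h1 h2 => h0 i (by omega) (by omega))
      (fun i h1 h2 => hm i (by omega) (by omega))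
    have e : ∑ i ∈ Finset.range (p+1), (-1)^(i+1) * a (j+(i+1))
       = - ∑ i ∈ Finset.range (p+1), (-1)^i * a (j+1+i) := by
      rw [← Finset.sum_neg_distrib]
      refine Finset.sum_congr rfl fun i _ => ?_
      rw [pow_succ, show j + (i+1) = j+1+i by ring]; ring
    rw [Finset.sum_range_succ', e]
    have := hm j le_rfl (by omega)
    simp only [pow_zero, add_zero, one_mul]
    constructor <;> linarith

lemma hp_harm (n : ℕ) : ∑ i ∈ Finset.range n, 1 / ((i:ℝ)+1) ≤ 2 * √n := by
  induction n with
  | zero => simp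
  | succ n ih =>
    rw [Finset.sum_range_succ]
    have h1 : √(n:ℝ) ^ 2 = n := Real.sq_sqrt (by positivity)
    have h2 : √((n:ℝ)+1) ^ 2 = n+1 := Real.sq_sqrt (by positivity)
    have h3 : √(n:ℝ) ≤ √((n:ℝ)+1) := Real.sqrt_le_sqrt (by linarith)
    have h4 : 1 ≤ √((n:ℝ)+1) := Real.one_le_sqrt.2 (by have := Nat.cast_nonneg (α := ℝ) n; linarith)
    have h0 : 0 ≤ √(n:ℝ) := Real.sqrt_nonneg _
    push_cast
    have h5 : 1 / ((n:ℝ)+1) ≤ 2 * (√((n:ℝ)+1) - √n) := by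
      set s := √((n:ℝ)+1)
      set r := √(n:ℝ)
      rw [← h2, div_le_iff₀ (by positivity)]
      have : (s - r) * (s + r) = 1 := by nlinarith
      have h6 : 0 ≤ s - r := by linarith
      nlinarith [mul_nonneg h6 (by nlinarith : 0 ≤ 2*s^2 - (s+r))]
    linarith

/-- Total bound. -/
lemma hp_two_sided (n k : ℕ) (hk : k ≤ n) :
    ∑ i ∈ Finset.range n, 1 / (|(i:ℝ) + 1 - k| + 1) ≤ 4 * √n := by
  obtain ⟨q, rfl⟩ := Nat.exists_eq_add_of_le hk
  rw [Finset.sum_range_add]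
  have a1 : ∑ i ∈ Finset.range k, 1 / (|(i:ℝ) + 1 - k| + 1) ≤ 2 * √((k+q : ℕ):ℝ) := by
    refine le_trans ?_ (le_trans (hp_harm k) ?_)
    · rw [← Finset.sum_range_reflect]
      refine Finset.sum_le_sum fun i hi => ?_
      have hi := Finset.mem_range.1 hi
      have : ((k - 1 - i : ℕ):ℝ) = k - 1 - i := by
        rw [Nat.cast_sub (by omega), Nat.cast_sub (by omega)]; simp
      rw [this]
      have : |(k:ℝ) - 1 - i + 1 - k| = i := by
        rw [show (k:ℝ) - 1 - i + 1 - k = -i by ring, abs_neg, Nat.abs_cast]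
      rw [this]
    · have := Real.sqrt_le_sqrt (show (k:ℝ) ≤ ((k+q:ℕ):ℝ) by exact_mod_cast hk)
      linarith
  have a2 : ∑ i ∈ Finset.range q, 1 / (|((k+i:ℕ):ℝ) + 1 - k| + 1) ≤ 2 * √((k+q : ℕ):ℝ) := by
    refine le_trans ?_ (le_trans (hp_harm q) ?_)
    · refine Finset.sum_le_sum fun i hi => ?_
      have : |((k+i:ℕ):ℝ) + 1 - k| = i + 1 := by
        push_cast
        rw [show (k:ℝ) + i + 1 - k = i + 1 by ring, abs_of_nonneg (by positivity)]
      rw [this]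
      apply one_div_le_one_div_of_le (by positivity) (by linarith)
    · have := Real.sqrt_le_sqrt (show (q:ℝ) ≤ ((k+q:ℕ):ℝ) by push_cast; linarith [Nat.cast_nonneg (α := ℝ) k])
      linarith
  linarith

lemma hp_theta (m j : ℕ) (hj : j ∈ Finset.Icc 1 m) :
    0 < (2 * (j : ℝ) - 1) * Real.pi / (2 * (m : ℝ)) ∧
    (2 * (j : ℝ) - 1) * Real.pi / (2 * (m : ℝ)) < π := by
  rw [Finset.mem_Icc] at hj
  have h1 : (1:ℝ) ≤ j := by exact_mod_cast hj.1
  have h2 : (j:ℝ) ≤ m := by exact_mod_cast hj.2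
  have := Real.pi_pos
  constructor
  · apply div_pos (mul_pos (by linarith) this) (by linarith)
  · rw [div_lt_iff₀ (by linarith)]; nlinarith

lemma hp_inj (m : ℕ) : Set.InjOn (chebNode m) (Finset.Icc 1 m) := by
  intro i hi j hj h
  have h1 := hp_theta m i hi
  have h2 := hp_theta m j hj
  have := Real.injOn_cos ⟨h1.1.le, h1.2.le⟩ ⟨h2.1.le, h2.2.le⟩ h
  have hm : (0:ℝ) < m := by
    have := Finset.mem_Icc.1 hi
    exact_mod_cast (by omega : 0 < m)
  have hp := Real.pi_pos
  field_simp at this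
  have : (i:ℝ) = j := by linarith
  exact_mod_cast this

open Polynomial in
lemma hp_T (m : ℕ) (hm : 1 ≤ m) : ∃ c : ℝ, c ≠ 0 ∧
    Chebyshev.T ℝ m = C c * Lagrange.nodal (Finset.Icc 1 m) (chebNode m) := by
  refine ⟨(Chebyshev.T ℝ m).leadingCoeff, ?_, ?_⟩
  · rw [Chebyshev.leadingCoeff_T]; positivity
  · have h0 : (Chebyshev.T ℝ m).leadingCoeff ≠ 0 := by
      rw [Chebyshev.leadingCoeff_T]; positivity
    apply Polynomial.eq_of_degree_le_of_eval_index_eq (Finset.Icc 1 m) (hp_inj m)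
    · rw [Chebyshev.degree_T]; simp
    · rw [Chebyshev.degree_T, degree_C_mul h0, Lagrange.degree_nodal]; simp
    · rw [leadingCoeff_mul, leadingCoeff_C, Lagrange.nodal_monic.leadingCoeff, mul_one]
    · intro i hi
      rw [eval_mul, Lagrange.eval_nodal_at_node hi, mul_zero, chebNode, Chebyshev.T_real_cos]
      rw [Real.cos_eq_zero_iff]
      refine ⟨(i:ℤ) - 1, ?_⟩
      have : (m:ℝ) ≠ 0 := by positivity
      push_cast
      field_simp
      ring

open Polynomial in
lemma hp_lag (m : ℕ) (j : ℕ) (hj : j ∈ Finset.Icc 1 m) (t : ℝ) :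
    lagBasis m j (cos t) * (m * (cos t - chebNode m j))
      = (-1)^(j+1) * sin ((2 * (j : ℝ) - 1) * Real.pi / (2 * (m : ℝ))) * cos (m * t) := by
  have hm : 1 ≤ m := by have := Finset.mem_Icc.1 hj; omega
  obtain ⟨c, hc, hT⟩ := hp_T m hm
  set a := (2 * (j : ℝ) - 1) * Real.pi / (2 * (m : ℝ)) with ha
  have hs : 0 < sin a := Real.sin_pos_of_pos_of_lt_pi (hp_theta m j hj).1 (hp_theta m j hj).2
  have e1 : cos (m * t) = c * ((cos t - chebNode m j) *
      ∏ i ∈ (Finset.Icc 1 m).erase j, (cos t - chebNode m i)) := by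
    have := Chebyshev.T_real_cos t m
    rw [hT, eval_mul, eval_C, Lagrange.eval_nodal] at this
    rw [Finset.mul_prod_erase _ (fun i => cos t - chebNode m i) hj, this]
    simp
  have e2 : c * ∏ i ∈ (Finset.Icc 1 m).erase j, (chebNode m j - chebNode m i)
      = m * (Chebyshev.U ℝ (m-1)).eval (chebNode m j) := by
    have := congrArg (fun p => p.eval (chebNode m j)) (congrArg derivative hT)
    simp only [derivative_C_mul, eval_mul, eval_C, Lagrange.eval_nodal_derivative_eval_node_eq hj,
      Lagrange.eval_nodal, Chebyshev.T_derivative_eq_U] at this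
    rw [← this]; simp
  have e3 : (Chebyshev.U ℝ (m-1)).eval (chebNode m j) * sin a = (-1)^(j+1) := by
    have := Chebyshev.U_real_cos a ((m:ℤ)-1)
    rw [chebNode, this]
    have hm' : (m:ℝ) ≠ 0 := by positivity
    rw [show (((m:ℤ) - 1 : ℤ) + 1 : ℝ) * a = (j:ℝ) * π - π/2 by
      rw [ha]; push_cast; field_simp; ring]
    rw [Real.sin_sub_pi_div_two, Real.cos_nat_mul_pi, pow_succ]; ring
  have e4 : ((-1:ℝ)^(j+1))^2 = 1 := by rw [← pow_mul, mul_comm, pow_mul]; simp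
  set P := ∏ i ∈ (Finset.Icc 1 m).erase j, (chebNode m j - chebNode m i) with hP
  have hPne : P ≠ 0 := by
    refine Finset.prod_ne_zero_iff.2 fun i hi => ?_
    have hi' := Finset.mem_erase.1 hi
    intro h
    exact hi'.1 (hp_inj m hi'.2 hj (by linarith))
  have e5 : (m:ℝ) = (-1)^(j+1) * sin a * (c * P) := by
    rw [e2]
    linear_combination (-(m:ℝ)) * e4 - (m:ℝ) * (-1)^(j+1) * e3
  have e6 : lagBasis m j (cos t) * P = ∏ i ∈ (Finset.Icc 1 m).erase j, (cos t - chebNode m i) := by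
    rw [lagBasis, Finset.prod_div_distrib, div_mul_cancel₀ _ hPne]
  rw [e1, e5, ← e6]
  ring

lemma hp_sum_one (m : ℕ) (hm : 1 ≤ m) (x : ℝ) : ∑ j ∈ Finset.Icc 1 m, lagBasis m j x = 1 := by
  have := congrArg (Polynomial.eval x)
    (Lagrange.sum_basis (hp_inj m) (Finset.nonempty_Icc.2 hm))
  rw [Polynomial.eval_finsetSum, Polynomial.eval_one] at this
  rw [← this]
  refine Finset.sum_congr rfl fun j hj => ?_
  rw [lagBasis, Lagrange.basis, Polynomial.eval_prod]
  refine Finset.prod_congr rfl fun i hi => ?_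
  simp [Lagrange.basisDivisor]; ring

lemma hp_self (m j : ℕ) (hj : j ∈ Finset.Icc 1 m) : lagBasis m j (chebNode m j) = 1 := by
  rw [lagBasis]
  refine Finset.prod_eq_one fun i hi => ?_
  have hi' := Finset.mem_erase.1 hi
  apply div_self
  intro h
  exact hi'.1 (hp_inj m hi'.2 hj (by linarith))

lemma hp_ne (m j k : ℕ) (hk : k ∈ Finset.Icc 1 m) (h : j ≠ k) :
    lagBasis m j (chebNode m k) = 0 := by
  rw [lagBasis]
  exact Finset.prod_eq_zero (i := k) (Finset.mem_erase.2 ⟨h.symm, hk⟩) (by simp)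

lemma hp_gmono (a b t : ℝ) (ha : 0 ≤ a) (hab : a ≤ b) (hb : b ≤ π) :
    sin a * (cos b - cos t) ≤ sin b * (cos a - cos t) := by
  have hp := Real.pi_pos
  have h1 : sin b * cos a - cos b * sin a = 2 * sin ((b-a)/2) * cos ((b-a)/2) := by
    rw [← Real.sin_sub, ← Real.sin_two_mul]; congr 1; ring
  have h2 : sin b - sin a = 2 * sin ((b-a)/2) * cos ((b+a)/2) := Real.sin_sub_sin b a
  have h3 : 0 ≤ sin ((b-a)/2) := Real.sin_nonneg_of_nonneg_of_le_pi (by linarith) (by linarith)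
  have h4 : cos ((b+a)/2) ≤ cos ((b-a)/2) :=
    Real.cos_le_cos_of_nonneg_of_le_pi (by linarith) (by linarith) (by linarith)
  have h5 : -cos ((b+a)/2) ≤ cos ((b-a)/2) := by
    rw [← Real.cos_pi_sub]
    exact Real.cos_le_cos_of_nonneg_of_le_pi (by linarith) (by linarith) (by linarith)
  have h6 : cos t * cos ((b+a)/2) ≤ cos ((b-a)/2) := by
    have h7 : |cos ((b+a)/2)| ≤ cos ((b-a)/2) := abs_le.2 ⟨by linarith, h4⟩
    calc cos t * cos ((b+a)/2) ≤ |cos t * cos ((b+a)/2)| := le_abs_self _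
      _ = |cos t| * |cos ((b+a)/2)| := abs_mul _ _
      _ ≤ 1 * |cos ((b+a)/2)| := by
        gcongr; exact Real.abs_cos_le_one t
      _ ≤ _ := by linarith
  have h8 := mul_le_mul_of_nonneg_left h6 (mul_nonneg (by norm_num : (0:ℝ) ≤ 2) h3)
  have h9 : cos t * (sin b - sin a) ≤ sin b * cos a - cos b * sin a := by
    rw [h1, h2]; linarith
  linarith

noncomputable def hpTh (m i : ℕ) : ℝ := (2 * ((i+1 : ℕ) : ℝ) - 1) * Real.pi / (2 * (m : ℝ))

lemma hpTh_mem (m i : ℕ) (hi : i < m) : 0 < hpTh m i ∧ hpTh m i < π :=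
  hp_theta m (i+1) (Finset.mem_Icc.2 ⟨by omega, by omega⟩)

lemma hpTh_sub (m i j : ℕ) (hm : 1 ≤ m) : (m:ℝ) * (hpTh m i - hpTh m j) = (i - j) * π := by
  have : (m:ℝ) ≠ 0 := by positivity
  unfold hpTh; push_cast; field_simp; ring

lemma hpTh_le (m i j : ℕ) (hm : 1 ≤ m) (h : i ≤ j) : hpTh m i ≤ hpTh m j := by
  have h1 := hpTh_sub m i j hm
  have h2 : (i:ℝ) ≤ j := by exact_mod_cast h
  have h3 : (0:ℝ) < m := by exact_mod_cast hm
  by_contra h4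
  push Not at h4
  have : 0 < (m:ℝ) * (hpTh m i - hpTh m j) := mul_pos h3 (by linarith)
  nlinarith [Real.pi_pos]

lemma hpL (m i : ℕ) (hi : i < m) (t : ℝ) :
    lagBasis m (i+1) (cos t) * (m * (cos t - cos (hpTh m i)))
      = (-1)^i * sin (hpTh m i) * cos (m * t) := by
  have := hp_lag m (i+1) (Finset.mem_Icc.2 ⟨by omega, by omega⟩) t
  rw [show i+1+1 = i+2 by ring, pow_add] at this
  simpa [hpTh, chebNode] using this

lemma hp_bound (m i : ℕ) (hi : i < m) (t : ℝ) (h0 : 0 ≤ t) (h1 : t ≤ π) (hne : t ≠ hpTh m i) :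
    |lagBasis m (i+1) (cos t)| * (m * |t - hpTh m i|) ≤ π ∧ |lagBasis m (i+1) (cos t)| ≤ π := by
  have hL := hpL m i hi t
  obtain ⟨q0, q1⟩ := hpTh_mem m i hi
  have hp := Real.pi_pos
  have hm : (0:ℝ) < m := by exact_mod_cast (by omega : 0 < m)
  have hc : cos (m * hpTh m i) = 0 := by
    rw [Real.cos_eq_zero_iff]
    refine ⟨i, ?_⟩
    unfold hpTh; push_cast; field_simp; ring
  set a := hpTh m i with ha
  set L := lagBasis m (i+1) (cos t) with hLdef
  have hs : 0 < sin ((t+a)/2) := Real.sin_pos_of_pos_of_lt_pi (by linarith) (by linarith)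
  have e1 : |cos t - cos a| = 2 * sin ((t+a)/2) * |sin ((t-a)/2)| := by
    rw [Real.cos_sub_cos, abs_mul, abs_mul, abs_of_pos hs]; norm_num
  have e2 : sin a ≤ 2 * sin ((t+a)/2) := by
    have := Real.sin_add_sin t a
    have h3 : 0 ≤ sin t := Real.sin_nonneg_of_nonneg_of_le_pi h0 h1
    nlinarith [Real.cos_le_one ((t-a)/2)]
  have e0 : 0 < sin a := Real.sin_pos_of_pos_of_lt_pi q0 q1
  have e3 : |L| * (m * (2 * sin ((t+a)/2) * |sin ((t-a)/2)|)) = sin a * |cos (m*t)| := by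
    have := congrArg abs hL
    rw [abs_mul, abs_mul, abs_mul, abs_mul, abs_pow, abs_neg, abs_one, one_pow, one_mul,
      abs_of_pos hm, abs_of_pos e0, e1] at this
    exact this
  have e4 : |L| * (m * |sin ((t-a)/2)|) ≤ |cos (m*t)| := by
    have : (2 * sin ((t+a)/2)) * (|L| * (m * |sin ((t-a)/2)|)) ≤ 2 * sin ((t+a)/2) * |cos (m*t)| := by
      calc _ = |L| * (m * (2 * sin ((t+a)/2) * |sin ((t-a)/2)|)) := by ring
        _ = _ := e3
        _ ≤ _ := mul_le_mul_of_nonneg_right e2 (abs_nonneg _)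
    exact le_of_mul_le_mul_left this (by positivity)
  have e5 : 2/π * |(t-a)/2| ≤ |sin ((t-a)/2)| := by
    apply Real.mul_abs_le_abs_sin
    rw [abs_le]; constructor <;> linarith
  have e6 : |t - a| ≤ π * |sin ((t-a)/2)| := by
    rw [abs_div, abs_two] at e5
    have := mul_le_mul_of_nonneg_left e5 hp.le
    have e : π * (2/π * (|t-a|/2)) = |t-a| := by field_simp
    linarith
  have e7 : |L| * (m * |t-a|) ≤ π * |cos (m*t)| := by
    calc |L| * (m * |t-a|) ≤ |L| * (m * (π * |sin ((t-a)/2)|)) := by gcongr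
      _ = π * (|L| * (m * |sin ((t-a)/2)|)) := by ring
      _ ≤ _ := by gcongr
  have e8 : |cos (m*t)| ≤ m * |t-a| := by
    have : cos (m*t) = - (sin (m*(t-a)) * sin (m*a)) := by
      rw [show (m:ℝ)*t = m*(t-a) + m*a by ring, Real.cos_add, hc]; ring
    rw [this, abs_neg, abs_mul]
    calc _ ≤ |(m:ℝ)*(t-a)| * 1 := by
          exact mul_le_mul Real.abs_sin_le_abs (Real.abs_sin_le_one _) (abs_nonneg _) (abs_nonneg _)
      _ = _ := by rw [abs_mul, abs_of_pos hm, mul_one]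
  have e9 : 0 < |t-a| := abs_pos.2 (sub_ne_zero.2 hne)
  constructor
  · refine e7.trans ?_
    have := Real.abs_cos_le_one (m*t)
    nlinarith
  · have : |L| * (m * |t-a|) ≤ π * (m * |t-a|) := e7.trans (by gcongr)
    exact le_of_mul_le_mul_right this (by positivity)

lemma hp_exk (m : ℕ) (hm : 1 ≤ m) (t : ℝ) (hne : ∀ i < m, t ≠ hpTh m i) :
    ∃ k ≤ m, (∀ i < k, hpTh m i < t) ∧ (∀ i < m, k ≤ i → t < hpTh m i) := by
  classical
  have hex : ∃ i, ¬ (i < m ∧ hpTh m i < t) := ⟨m, by simp⟩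
  refine ⟨Nat.find hex, Nat.find_min' hex (by simp), ?_, ?_⟩
  · intro i hi
    have := Nat.find_min hex hi
    push Not at this
    exact this.2
  · intro i hi hk
    have := Nat.find_spec hex
    have h1 : t ≤ hpTh m (Nat.find hex) := by
      by_contra h
      exact this ⟨lt_of_le_of_lt hk hi, lt_of_not_ge h⟩
    exact lt_of_le_of_ne (h1.trans (hpTh_le m _ _ hm hk)) (hne i hi)

lemma hp_err (m : ℕ) (hm : 1 ≤ m) (t : ℝ) (h0 : 0 ≤ t) (h1 : t ≤ π)
    (hne : ∀ i < m, t ≠ hpTh m i) (k : ℕ) (hkm : k ≤ m) (hk1 : ∀ i < k, hpTh m i < t)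
    (hk2 : ∀ i < m, k ≤ i → t < hpTh m i) (j : ℕ) (hj : j + 1 < m) :
    |(∑ i ∈ Finset.range (j+1), lagBasis m (i+1) (cos t)) - (if k ≤ j then 1 else 0)|
      ≤ 5 * (1 / (|(j:ℝ) + 1 - k| + 1)) := by
  have hmp : (0:ℝ) < m := by exact_mod_cast hm
  have hp := Real.pi_pos
  set c := cos (m*t) / m with hc
  have hcm : c * m = cos (m*t) := by rw [hc]; field_simp
  have fin : ∀ i < m, ∀ d : ℝ, d * π ≤ m * |t - hpTh m i| →
      |lagBasis m (i+1) (cos t)| * (d + 1) ≤ 5 := by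
    intro i hi d hd
    obtain ⟨b1, b2⟩ := hp_bound m i hi t h0 h1 (hne i hi)
    have := mul_le_mul_of_nonneg_left hd (abs_nonneg (lagBasis m (i+1) (cos t)))
    have h3 : π * (|lagBasis m (i+1) (cos t)| * d) ≤ π * 1 := by linarith
    have h4 := le_of_mul_le_mul_left h3 hp
    have := Real.pi_lt_four
    linarith
  by_cases hkj : k ≤ j
  · -- tail
    rw [if_pos hkj]
    obtain ⟨p, hpm⟩ := Nat.exists_eq_add_of_lt hj
    have hone : ∑ i ∈ Finset.range m, lagBasis m (i+1) (cos t) = 1 := by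
      rw [← hp_sum_one m hm (cos t), Finset.range_eq_Ico, Finset.sum_Ico_add' (fun i => lagBasis m i (cos t)) 0 m 1]
      rfl
    have hsplit : ∑ i ∈ Finset.range m, lagBasis m (i+1) (cos t)
        = ∑ i ∈ Finset.range (j+1), lagBasis m (i+1) (cos t)
          + ∑ i ∈ Finset.range (p+1), lagBasis m (j+1+i+1) (cos t) := by
      rw [← Finset.sum_range_add (fun i => lagBasis m (i+1) (cos t))]
      congr 2
    let a : ℕ → ℝ := fun i => sin (hpTh m i) / (cos t - cos (hpTh m i))
    have hpos : ∀ i < m, k ≤ i → 0 < cos t - cos (hpTh m i) := by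
      intro i hi hki
      have := Real.cos_lt_cos_of_nonneg_of_le_pi h0 (hpTh_mem m i hi).2.le (hk2 i hi hki)
      linarith
    have hLa : ∀ i < m, k ≤ i → lagBasis m (i+1) (cos t) = (-1)^i * (c * a i) := by
      intro i hi hki
      have h2 := hpos i hi hki
      have := hpL m i hi t
      rw [← hcm] at this
      simp only [a]
      field_simp
      have h5 : (m:ℝ) * (lagBasis m (i+1) (cos t) * (cos t - cos (hpTh m i))) = m * ((-1)^i * sin (hpTh m i) * c) := by
        linarith
      have := mul_left_cancel₀ hmp.ne' h5
      linarith
    have hdec := hp_alt_dec a p (j+1)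
      (fun i hi1 hi2 => div_nonneg (Real.sin_nonneg_of_nonneg_of_le_pi (hpTh_mem m i (by omega)).1.le (hpTh_mem m i (by omega)).2.le) (hpos i (by omega) (by omega)).le)
      (fun i hi1 hi2 => by
        have q1 := hpos i (by omega) (by omega)
        have q2 := hpos (i+1) (by omega) (by omega)
        simp only [a]
        rw [div_le_div_iff₀ q2 q1]
        have := hp_gmono (hpTh m i) (hpTh m (i+1)) t (hpTh_mem m i (by omega)).1.le
          (hpTh_le m _ _ hm (by omega)) (hpTh_mem m (i+1) (by omega)).2.le
        linarith)
    have htail : ∑ i ∈ Finset.range (p+1), lagBasis m (j+1+i+1) (cos t)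
        = (-1)^(j+1) * c * ∑ i ∈ Finset.range (p+1), (-1)^i * a (j+1+i) := by
      rw [Finset.mul_sum]
      refine Finset.sum_congr rfl fun i hi => ?_
      have := Finset.mem_range.1 hi
      rw [hLa (j+1+i) (by omega) (by omega), pow_add]; ring
    have hle : |(∑ i ∈ Finset.range (j+1), lagBasis m (i+1) (cos t)) - 1| ≤ |lagBasis m (j+1+1) (cos t)| := by
      rw [← hone, hsplit, sub_add_cancel_left, abs_neg, htail, hLa (j+1) (by omega) (by omega)]
      rw [abs_mul, abs_of_nonneg hdec.1, ← mul_assoc, abs_mul _ (a (j+1)), abs_of_nonneg (hdec.1.trans hdec.2)]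
      exact mul_le_mul_of_nonneg_left hdec.2 (abs_nonneg _)
    refine hle.trans ?_
    have hd : |(j:ℝ) + 1 - k| = j + 1 - k := abs_of_nonneg (by
      have : (k:ℝ) ≤ j := by exact_mod_cast hkj
      linarith)
    rw [mul_one_div, le_div_iff₀ (by positivity)]
    apply fin (j+1) hj
    rw [hd]
    have q1 := hpTh_sub m (j+1) k hm
    have q2 := hk2 k (by omega) le_rfl
    have q3 := hk2 (j+1) hj (by omega)
    rw [abs_of_neg (by linarith)]
    push_cast at q1
    have := mul_pos hmp (sub_pos.2 q2)
    linarith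
  · -- head
    rw [if_neg hkj, sub_zero]
    push Not at hkj
    let a : ℕ → ℝ := fun i => sin (hpTh m i) / (cos (hpTh m i) - cos t)
    have hpos : ∀ i < k, 0 < cos (hpTh m i) - cos t := by
      intro i hi
      have := Real.cos_lt_cos_of_nonneg_of_le_pi (hpTh_mem m i (by omega)).1.le h1 (hk1 i hi)
      linarith
    have hLa : ∀ i < k, lagBasis m (i+1) (cos t) = -c * ((-1)^i * a i) := by
      intro i hi
      have h2 := hpos i hi
      have := hpL m i (by omega) t
      rw [← hcm] at this
      simp only [a]
      field_simp
      have h5 : (m:ℝ) * (lagBasis m (i+1) (cos t) * (cos t - cos (hpTh m i))) = m * ((-1)^i * sin (hpTh m i) * c) := by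
        linarith
      have := mul_left_cancel₀ hmp.ne' h5
      linarith
    have hinc := hp_alt_inc a k
      (fun i hi => div_nonneg (Real.sin_nonneg_of_nonneg_of_le_pi (hpTh_mem m i (by omega)).1.le (hpTh_mem m i (by omega)).2.le) (hpos i hi).le)
      (fun i hi => by
        have q1 := hpos i (by omega)
        have q2 := hpos (i+1) (by omega)
        simp only [a]
        rw [div_le_div_iff₀ q1 q2]
        exact hp_gmono (hpTh m i) (hpTh m (i+1)) t (hpTh_mem m i (by omega)).1.le
          (hpTh_le m _ _ hm (by omega)) (hpTh_mem m (i+1) (by omega)).2.le) j hkj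
    have hhead : ∑ i ∈ Finset.range (j+1), lagBasis m (i+1) (cos t)
        = -c * ∑ i ∈ Finset.range (j+1), (-1)^i * a i := by
      rw [Finset.mul_sum]
      refine Finset.sum_congr rfl fun i hi => ?_
      have := Finset.mem_range.1 hi
      rw [hLa i (by omega)]
    have hab : |∑ i ∈ Finset.range (j+1), (-1)^i * a i| ≤ |(-1)^j * a j| := by
      have h5 : |(-1)^j * ∑ i ∈ Finset.range (j+1), (-1)^i * a i| = |∑ i ∈ Finset.range (j+1), (-1)^i * a i| := by
        rw [abs_mul, abs_pow, abs_neg, abs_one, one_pow, one_mul]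
      rw [← h5, abs_of_nonneg hinc.1, abs_mul, abs_pow, abs_neg, abs_one, one_pow, one_mul]
      exact hinc.2.trans (le_abs_self _)
    have hle : |∑ i ∈ Finset.range (j+1), lagBasis m (i+1) (cos t)| ≤ |lagBasis m (j+1) (cos t)| := by
      rw [hhead, hLa j hkj, abs_mul, abs_mul]
      exact mul_le_mul_of_nonneg_left hab (abs_nonneg _)
    refine hle.trans ?_
    have hkr : (j:ℝ) + 1 ≤ k := by exact_mod_cast hkj
    have hd : |(j:ℝ) + 1 - k| = k - 1 - j := by
      rw [abs_of_nonpos (by linarith)]; ring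
    rw [mul_one_div, le_div_iff₀ (by positivity)]
    apply fin j (by omega)
    rw [hd]
    have q1 := hpTh_sub m (k-1) j hm
    have q2 := hk1 (k-1) (by omega)
    have q3 := hk1 j hkj
    rw [abs_of_pos (by linarith)]
    rw [Nat.cast_sub (by omega)] at q1
    push_cast at q1
    have := mul_pos hmp (sub_pos.2 q2)
    linarith

lemma hp_lip (F : ℝ → ℝ) (hF : ContDiffOn ℝ 2 F (Set.Icc (-1 : ℝ) 1)) (M : ℝ)
    (hM : ∀ x ∈ Set.Icc (-1 : ℝ) 1, |deriv F x| ≤ M) (a b : ℝ) :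
    |F (cos a) - F (cos b)| ≤ M * |a - b| := by
  have hM0 : 0 ≤ M := (abs_nonneg _).trans (hM 0 (by simp))
  have key : ∀ x ∈ Set.Icc (-1:ℝ) 1, ∀ y ∈ Set.Icc (-1:ℝ) 1, x < y → |F y - F x| ≤ M * |y - x| := by
    intro x hx y hy hxy
    obtain ⟨c, hc, hcs⟩ := exists_deriv_eq_slope F hxy
      (hF.continuousOn.mono (Set.Icc_subset_Icc hx.1 hy.2))
      (fun z hz => ((hF.differentiableOn (by norm_num) z ⟨by linarith [hx.1, hz.1], by linarith [hy.2, hz.2]⟩).differentiableAt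
        (Icc_mem_nhds (by linarith [hx.1, hz.1]) (by linarith [hy.2, hz.2]))).differentiableWithinAt)
    have h1 := hM c ⟨by linarith [hx.1, hc.1], by linarith [hy.2, hc.2]⟩
    have h2 : F y - F x = deriv F c * (y - x) := by
      rw [hcs, div_mul_cancel₀ _ (sub_pos.2 hxy).ne']
    rw [h2, abs_mul]
    exact mul_le_mul_of_nonneg_right h1 (abs_nonneg _)
  have hcos : |cos a - cos b| ≤ |a - b| := by
    rw [Real.cos_sub_cos, abs_mul, abs_mul, abs_neg, abs_two]
    have q1 := Real.abs_sin_le_one ((a+b)/2)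
    have q2 : |sin ((a-b)/2)| ≤ |(a-b)/2| := Real.abs_sin_le_abs
    rw [abs_div, abs_two] at q2
    nlinarith [abs_nonneg (sin ((a-b)/2)), abs_nonneg (sin ((a+b)/2))]
  refine le_trans ?_ (mul_le_mul_of_nonneg_left hcos hM0)
  have ha := Real.cos_mem_Icc a
  have hb := Real.cos_mem_Icc b
  rcases lt_trichotomy (cos a) (cos b) with h | h | h
  · rw [abs_sub_comm, abs_sub_comm (cos a)]; exact key _ ha _ hb h
  · simp [h]
  · exact key _ hb _ ha h

lemma hp_tele (f : ℕ → ℝ) (k n : ℕ) :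
    f n + ∑ j ∈ Finset.range n, (if k ≤ j then (1:ℝ) else 0) * (f j - f (j+1)) = f (min k n) := by
  induction n with
  | zero => simp
  | succ n ih =>
    rw [Finset.sum_range_succ]
    by_cases h : k ≤ n
    · rw [min_eq_left h] at ih
      rw [min_eq_left (by omega), if_pos h]; linarith
    · have hz : ∑ j ∈ Finset.range n, (if k ≤ j then (1:ℝ) else 0) * (f j - f (j+1)) = 0 := by
        refine Finset.sum_eq_zero fun j hj => ?_
        have := Finset.mem_range.1 hj
        rw [if_neg (by omega), zero_mul]
      rw [hz, if_neg h, min_eq_right (by omega)]; ring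

lemma hp_combine (f L : ℕ → ℝ) (n k : ℕ) (D : ℝ) (hk : k ≤ n + 1)
    (hone : ∑ i ∈ Finset.range (n+1), L i = 1)
    (hd : ∀ j < n, |f j - f (j+1)| ≤ D)
    (he : ∀ j < n, |(∑ i ∈ Finset.range (j+1), L i) - (if k ≤ j then 1 else 0)|
      ≤ 5 * (1 / (|(j:ℝ) + 1 - k| + 1))) :
    |∑ i ∈ Finset.range (n+1), ∑ j ∈ Finset.range (n+1), f (max i j) * L i * L j - f (min k n)|
      ≤ 140 * (D * √((n+1:ℕ):ℝ)) ∧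
    |∑ i ∈ Finset.range (n+1), f i * L i - f (min k n)| ≤ 20 * (D * √((n+1:ℕ):ℝ)) ∨ n = 0 := by
  rcases Nat.eq_zero_or_pos n with h0 | hn
  · right; exact h0
  left
  have hD : 0 ≤ D := (abs_nonneg _).trans (hd 0 hn)
  have hsum : ∑ j ∈ Finset.range n, 1 / (|(j:ℝ) + 1 - k| + 1) ≤ 4 * √((n+1:ℕ):ℝ) := by
    refine le_trans ?_ (hp_two_sided (n+1) k hk)
    exact Finset.sum_le_sum_of_subset_of_nonneg (Finset.range_mono (by omega))
      (fun i _ _ => by positivity)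
  have gen : ∀ (E : ℝ), 0 ≤ E → ∀ g : ℕ → ℝ, (∀ j < n, |g j| ≤ E * (1 / (|(j:ℝ) + 1 - k| + 1))) →
      |∑ j ∈ Finset.range n, g j * (f j - f (j+1))| ≤ 4 * E * (D * √((n+1:ℕ):ℝ)) := by
    intro E hE g hg
    calc _ ≤ ∑ j ∈ Finset.range n, |g j * (f j - f (j+1))| := Finset.abs_sum_le_sum_abs _ _
      _ ≤ ∑ j ∈ Finset.range n, (E * D) * (1 / (|(j:ℝ) + 1 - k| + 1)) := by
        refine Finset.sum_le_sum fun j hj => ?_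
        have hj := Finset.mem_range.1 hj
        rw [abs_mul]
        calc _ ≤ (E * (1 / (|(j:ℝ) + 1 - k| + 1))) * D :=
              mul_le_mul (hg j hj) (hd j hj) (abs_nonneg _) (by positivity)
          _ = _ := by ring
      _ ≤ (E * D) * (4 * √((n+1:ℕ):ℝ)) := by
        rw [← Finset.mul_sum]
        exact mul_le_mul_of_nonneg_left hsum (by positivity)
      _ = _ := by ring
  constructor
  · rw [hp_double, hone, ← hp_tele f k n, one_pow, mul_one, add_sub_add_left_eq_sub,
      ← Finset.sum_sub_distrib]
    simp only [← sub_mul]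
    refine (gen 35 (by norm_num) _ fun j hj => ?_).trans (by linarith)
    have h := he j hj
    set S := ∑ i ∈ Finset.range (j+1), L i
    set w := 1 / (|(j:ℝ) + 1 - k| + 1) with hw
    have hw1 : w ≤ 1 := by
      rw [hw, div_le_one (by positivity)]; linarith [abs_nonneg ((j:ℝ)+1-k)]
    have hw0 : 0 ≤ w := by positivity
    split_ifs at h ⊢ with hc
    · rw [show S^2 - 1 = (S-1) * (S+1) by ring, abs_mul]
      have : |S + 1| ≤ 7 := by
        have := abs_le.1 h
        rw [abs_le]; constructor <;> linarith
      calc _ ≤ (5*w) * 7 := mul_le_mul h this (abs_nonneg _) (by positivity)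
        _ = _ := by ring
    · rw [sub_zero] at h ⊢
      rw [pow_two, abs_mul]
      calc _ ≤ (5*w) * 7 := mul_le_mul h (by linarith) (abs_nonneg _) (by positivity)
        _ = _ := by ring
  · rw [hp_single, hone, ← hp_tele f k n, mul_one, add_sub_add_left_eq_sub,
      ← Finset.sum_sub_distrib]
    simp only [← sub_mul]
    exact (gen 5 (by norm_num) _ he).trans (by linarith)

lemma hp_icc (m : ℕ) (g : ℕ → ℝ) :
    ∑ j ∈ Finset.Icc 1 m, g j = ∑ i ∈ Finset.range m, g (i+1) := by
  rw [Finset.range_eq_Ico, Finset.sum_Ico_add' g 0 m 1]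
  rfl

/-- Uniform `O(m^{−1/2})` approximation of the limiting variance `F(x)(1−F(x))` by the
double Lagrange–Chebyshev sum of the covariance kernel `min(F(x_j),F(x_l)) − F(x_j)F(x_l)`. -/
theorem variance_kernel_double_sum_approx
    (F : ℝ → ℝ)
    (hmono : MonotoneOn F (Set.Icc (-1 : ℝ) 1))
    (hrange : ∀ x ∈ Set.Icc (-1 : ℝ) 1, F x ∈ Set.Icc (0 : ℝ) 1)
    (hF : ContDiffOn ℝ 2 F (Set.Icc (-1 : ℝ) 1))
    (hbd : ∃ M : ℝ, ∀ x ∈ Set.Icc (-1 : ℝ) 1,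
      |deriv F x| ≤ M ∧ |deriv (deriv F) x| ≤ M) :
    ∃ C > 0, ∀ m : ℕ, 1 ≤ m → ∀ x ∈ Set.Icc (-1 : ℝ) 1,
      |(∑ j ∈ Finset.Icc 1 m, ∑ l ∈ Finset.Icc 1 m,
          (min (F (chebNode m j)) (F (chebNode m l)) - F (chebNode m j) * F (chebNode m l)) *
            lagBasis m j x * lagBasis m l x) - F x * (1 - F x)| ≤ C / Real.sqrt m := by
  obtain ⟨M, hM⟩ := hbd
  have hlip := hp_lip F hF M (fun x hx => (hM x hx).1)
  have hM0 : 0 ≤ M := (abs_nonneg _).trans (hM 0 (by simp)).1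
  have hp := Real.pi_pos
  set A := 141 * (M * π) with hA
  have hA0 : 0 ≤ A := by positivity
  refine ⟨A + A * (A + 2) + 1, by positivity, ?_⟩
  intro m hm x hx
  have hmr : (0:ℝ) < m := by exact_mod_cast hm
  have hs1 : 1 ≤ √(m:ℝ) := Real.one_le_sqrt.2 (by exact_mod_cast hm)
  have hs2 : √(m:ℝ)^2 = m := Real.sq_sqrt hmr.le
  by_cases hnode : ∃ k ∈ Finset.Icc 1 m, x = chebNode m k
  · obtain ⟨k, hk, rfl⟩ := hnode
    rw [Finset.sum_eq_single_of_mem k hk, Finset.sum_eq_single_of_mem k hk]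
    · rw [hp_self m k hk, min_self]
      have : (F (chebNode m k) - F (chebNode m k) * F (chebNode m k)) * 1 * 1
        - F (chebNode m k) * (1 - F (chebNode m k)) = 0 := by ring
      rw [this, abs_zero]; positivity
    · intro j _ hjk
      rw [hp_ne m j k hk hjk]; ring
    · intro j _ hjk
      refine Finset.sum_eq_zero fun l _ => ?_
      rw [hp_ne m j k hk hjk]; ring
  push Not at hnode
  obtain ⟨t, ht0, ht1, rfl⟩ : ∃ t, 0 ≤ t ∧ t ≤ π ∧ cos t = x :=
    ⟨arccos x, Real.arccos_nonneg x, Real.arccos_le_pi x, Real.cos_arccos hx.1 hx.2⟩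
  have hne : ∀ i < m, t ≠ hpTh m i := by
    intro i hi h
    apply hnode (i+1) (Finset.mem_Icc.2 ⟨by omega, by omega⟩)
    rw [h]; rfl
  obtain ⟨k, hkm, hk1, hk2⟩ := hp_exk m hm t hne
  obtain ⟨n, rfl⟩ : ∃ n, m = n + 1 := ⟨m - 1, by omega⟩
  set f : ℕ → ℝ := fun i => F (cos (hpTh (n+1) i)) with hf
  set L : ℕ → ℝ := fun i => lagBasis (n+1) (i+1) (cos t) with hL
  have hcn : ∀ i, F (chebNode (n+1) (i+1)) = f i := fun i => rfl
  have hone : ∑ i ∈ Finset.range (n+1), L i = 1 := by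
    rw [← hp_sum_one (n+1) hm (cos t), hp_icc]
  have hanti : ∀ i j, i ≤ j → j < n + 1 → f j ≤ f i := by
    intro i j hij hj
    apply hmono (Real.cos_mem_Icc _) (Real.cos_mem_Icc _)
    exact Real.cos_le_cos_of_nonneg_of_le_pi (hpTh_mem _ i (by omega)).1.le (hpTh_mem _ j hj).2.le
      (hpTh_le _ _ _ hm hij)
  have hsumeq : ∑ j ∈ Finset.Icc 1 (n+1), ∑ l ∈ Finset.Icc 1 (n+1),
          (min (F (chebNode (n+1) j)) (F (chebNode (n+1) l)) - F (chebNode (n+1) j) * F (chebNode (n+1) l)) *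
            lagBasis (n+1) j (cos t) * lagBasis (n+1) l (cos t)
      = ∑ i ∈ Finset.range (n+1), ∑ j ∈ Finset.range (n+1), f (max i j) * L i * L j
        - (∑ i ∈ Finset.range (n+1), f i * L i)^2 := by
    rw [pow_two, Finset.sum_mul_sum, ← Finset.sum_sub_distrib, hp_icc]
    refine Finset.sum_congr rfl fun i hi => ?_
    rw [← Finset.sum_sub_distrib, hp_icc]
    refine Finset.sum_congr rfl fun j hj => ?_
    have hi := Finset.mem_range.1 hi
    have hj := Finset.mem_range.1 hj
    rw [hcn, hcn]
    have : min (f i) (f j) = f (max i j) := by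
      rcases le_total i j with h | h
      · rw [max_eq_right h, min_eq_right (hanti i j h hj)]
      · rw [max_eq_left h, min_eq_left (hanti j i h hi)]
    rw [this]; simp only [hL]; ring
  rw [hsumeq]
  set D := M * (π / ((n+1:ℕ):ℝ)) with hD
  have hD0 : 0 ≤ D := by positivity
  have hd : ∀ j < n, |f j - f (j+1)| ≤ D := by
    intro j _
    refine (hlip _ _).trans ?_
    refine mul_le_mul_of_nonneg_left ?_ hM0
    have := hpTh_sub (n+1) j (j+1) hm
    have h2 : hpTh (n+1) j - hpTh (n+1) (j+1) = - (π / ((n+1:ℕ):ℝ)) := by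
      rw [← neg_div, eq_div_iff hmr.ne', mul_comm, this]; push_cast; ring
    rw [h2, abs_neg, abs_of_nonneg (by positivity)]
  have he := fun j (hj : j < n) => hp_err (n+1) hm t ht0 ht1 hne k hkm hk1 hk2 j (by omega)
  have hclose : |f (min k n) - F (cos t)| ≤ D := by
    refine (hlip _ _).trans ?_
    refine mul_le_mul_of_nonneg_left ?_ hM0
    rw [le_div_iff₀ hmr, mul_comm, ← abs_of_pos hmr, ← abs_mul, abs_le]
    have z0 : ((n+1:ℕ):ℝ) * hpTh (n+1) 0 = π / 2 := by
      unfold hpTh; push_cast; field_simp; try ring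
    have zn : ((n+1:ℕ):ℝ) * hpTh (n+1) n = ((n+1:ℕ):ℝ) * π - π / 2 := by
      unfold hpTh; push_cast; field_simp
    rcases Nat.lt_or_ge n k with h | h
    · rw [min_eq_right h.le]
      have q := mul_lt_mul_of_pos_left (hk1 n h) hmr
      have q2 := mul_le_mul_of_nonneg_left ht1 hmr.le
      constructor <;> linarith
    · rw [min_eq_left h]
      have q := mul_lt_mul_of_pos_left (hk2 k (by omega) le_rfl) hmr
      refine ⟨by linarith, ?_⟩
      rcases Nat.eq_zero_or_pos k with h0 | h0
      · subst h0
        have q2 := mul_nonneg hmr.le ht0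
        linarith
      · have q2 := mul_lt_mul_of_pos_left (hk1 (k-1) (by omega)) hmr
        have q3 := hpTh_sub (n+1) k (k-1) hm
        rw [Nat.cast_sub (by omega)] at q3
        push_cast at q3 q2 ⊢
        linarith
  have hDs : D ≤ D * √((n+1:ℕ):ℝ) := le_mul_of_one_le_right hD0 hs1
  have hDA : 141 * (D * √((n+1:ℕ):ℝ)) = A / √((n+1:ℕ):ℝ) := by
    rw [hD, hA, ← hs2]
    have : √((n+1:ℕ):ℝ) ≠ 0 := by positivity
    rw [Real.sqrt_sq (by positivity)]
    field_simp
  set T1 := ∑ i ∈ Finset.range (n+1), ∑ j ∈ Finset.range (n+1), f (max i j) * L i * L j with hT1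
  set T2 := ∑ i ∈ Finset.range (n+1), f i * L i with hT2
  have hb : |T1 - F (cos t)| ≤ A / √((n+1:ℕ):ℝ) ∧ |T2 - F (cos t)| ≤ A / √((n+1:ℕ):ℝ) := by
    rw [← hDA]
    have hfin : |T1 - f (min k n)| ≤ 140 * (D * √((n+1:ℕ):ℝ)) ∧
        |T2 - f (min k n)| ≤ 140 * (D * √((n+1:ℕ):ℝ)) := by
      have hnn : 0 ≤ D * √((n+1:ℕ):ℝ) := by positivity
      rcases hp_combine f L n k D hkm hone hd he with h | h
      · exact ⟨h.1, h.2.trans (by linarith)⟩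
      · have hL0 : L 0 = 1 := by rw [h] at hone; simpa using hone
        have e1 : T1 = f 0 := by rw [hT1, h]; simp [hL0]
        have e2 : T2 = f 0 := by rw [hT2, h]; simp [hL0]
        have e3 : min k n = 0 := by omega
        rw [e1, e2, e3, sub_self, abs_zero]
        constructor <;> linarith
    constructor
    · have := abs_sub_le T1 (f (min k n)) (F (cos t)); linarith [hfin.1]
    · have := abs_sub_le T2 (f (min k n)) (F (cos t)); linarith [hfin.2]
  obtain ⟨b1, b2⟩ := hb
  obtain ⟨r0, r1⟩ := hrange _ hx
  set s := √((n+1:ℕ):ℝ)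
  have hAs : A / s ≤ A := div_le_self hA0 hs1
  have b3 : |T2 + F (cos t)| ≤ A + 2 := by
    have := abs_le.1 b2
    rw [abs_le]; constructor <;> linarith
  have e : T1 - T2^2 - F (cos t) * (1 - F (cos t))
      = (T1 - F (cos t)) - (T2 - F (cos t)) * (T2 + F (cos t)) := by ring
  rw [e]
  calc _ ≤ |T1 - F (cos t)| + |(T2 - F (cos t)) * (T2 + F (cos t))| := abs_sub _ _
    _ ≤ A / s + (A / s) * (A + 2) := by
      rw [abs_mul]
      exact add_le_add b1 (mul_le_mul b2 b3 (abs_nonneg _) (by positivity))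
    _ = (A + A * (A+2)) / s := by ring
    _ ≤ _ := div_le_div_of_nonneg_right (by linarith) (by positivity)
end
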